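/- Let q be an odd prime power, a, b ∈ F_q, and suppose (t, u, v) ∈ F_q³ is an associative triple of L := L_{a,b}, i.e. L(L(t,u), v) = L(t, L(u,v)), where u − t is a non-zero square in F_q. Let z = (v − t)/(u − t). Then (0, 1, z) is an associative triple of L: L(L(0,1), z) = L(0, L(1,z)). -/

import Mathlib

open scoped Classical

/-!
Multiplying by a non-zero square preserves both squares and non-squares, so every affine map
`x ↦ t + s * x` with `s` a non-zero square is an automorphism of `(F, L_{a,b})`. For `s = u - t`
this automorphism carries `(0, 1, (v - t) / (u - t))` to `(t, u, v)`.
-/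

/-- An associative triple of a binary operation `op`. -/
def IsAssocTriple {α : Type*} (op : α → α → α) (x y z : α) : Prop :=
  op (op x y) z = op x (op y z)

theorem isAssocTriple_map_iff {α β : Type*} {opα : α → α → α} {opβ : β → β → β} {f : α → β}
    (hf : Function.Injective f) (hop : Function.Semiconj₂ f opα opβ) {x y z : α} :
    IsAssocTriple opβ (f x) (f y) (f z) ↔ IsAssocTriple opα x y z := by
  simp only [IsAssocTriple, ← hop.eq, hf.eq_iff]

theorem isSquare_mul_iff_of_isSquare_left {G₀ : Type*} [CommGroupWithZero G₀] {s x : G₀}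
    (hs : IsSquare s) (hs0 : s ≠ 0) : IsSquare (s * x) ↔ IsSquare x :=
  ⟨fun h ↦ by simpa only [mul_div_cancel_left₀ x hs0] using h.div hs, hs.mul⟩

/-- The operation `L_{a,b}`, over an arbitrary ring. The element `0` counts as a square. -/
noncomputable def quadraticOp {R : Type*} [Ring R] (a b x y : R) : R :=
  if IsSquare (y - x) then x + a * (y - x) else x + b * (y - x)

section Field

variable {F : Type*} [Field F]

theorem semiconj₂_quadraticOp_affine (a b t : F) {s : F} (hs : IsSquare s) (hs0 : s ≠ 0) :
    Function.Semiconj₂ (fun x ↦ t + s * x) (quadraticOp a b) (quadraticOp a b) := by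
  intro x y
  have hsub : t + s * y - (t + s * x) = s * (y - x) := by ring
  simp only [quadraticOp, hsub, isSquare_mul_iff_of_isSquare_left hs hs0]
  split_ifs <;> ring

theorem assoc_triple_reduction_general (a b : F) {t u : F} (v : F)
    (hsq : IsSquare (u - t)) (hne : u - t ≠ 0) :
    IsAssocTriple (quadraticOp a b) t u v ↔
      IsAssocTriple (quadraticOp a b) 0 1 ((v - t) / (u - t)) := by
  have hinj : Function.Injective fun x ↦ t + (u - t) * x :=
    (add_right_injective t).comp (mul_right_injective₀ hne)
  have hmap := isAssocTriple_map_iff hinj (semiconj₂_quadraticOp_affine a b t hsq hne)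
    (x := 0) (y := 1) (z := (v - t) / (u - t))
  simpa only [mul_zero, add_zero, mul_one, add_sub_cancel, mul_div_cancel₀ _ hne] using hmap

end Field

/-- An associative triple `(t,u,v)` of `L_{a,b}` with `u - t` a non-zero square
reduces to the associative triple `(0, 1, (v-t)/(u-t))`. -/
theorem assoc_triple_reduction (F : Type*) [Field F] [Fintype F]
    (q : ℕ) (hq : Fintype.card F = q) (hodd : Odd q)
    (a b : F) (L : F → F → F)
    (hL : ∀ x y : F,
      L x y = if IsSquare (y - x) then x + a * (y - x) else x + b * (y - x))
    (t u v : F) (hsq : IsSquare (u - t)) (hne : u - t ≠ 0)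
    (hassoc : L (L t u) v = L t (L u v)) :
    L (L 0 1) ((v - t) / (u - t)) = L 0 (L 1 ((v - t) / (u - t))) := by
  -- `congr` identifies the decidability instance coming from `Fintype F` with the classical one.
  obtain rfl : L = quadraticOp a b := by ext x y; rw [hL, quadraticOp]; congr
  exact (assoc_triple_reduction_general a b v hsq hne).mp hassoc
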